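/- Theorem 3.2 (total divergence condition yields conserved currents): let L be a Lagrangian density, φ a smooth solution of the Euler–Lagrange equation for L, and Φ a perturbed field associated with φ. Suppose there are smooth maps ψ^μ : (Fin D → ℝ) → ℝ (μ : Fin D) such that for all x the derivative at ε = 0 of ε ↦ L(x, Φ(ε,x), ∇Φ_ε x) equals Σ_μ ∂_μ ψ^μ x (the total divergence condition). Then the current j^μ x := L_{p_μ}(jφ x) · δΦ x − ψ^μ x is conserved: Σ_μ ∂_μ j^μ x = 0 for all x. -/

import Mathlib

open scoped BigOperators

noncomputable section

/-- Spacetime partial derivative `∂_μ F x`. -/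
def pd {D : ℕ} (F : (Fin D → ℝ) → ℝ) (μ : Fin D) (x : Fin D → ℝ) : ℝ :=
  fderiv ℝ F x (Pi.single μ 1)

/-- Gradient (jet of first derivatives) of a field. -/
def grad {D : ℕ} (φ : (Fin D → ℝ) → ℝ) (x : Fin D → ℝ) : Fin D → ℝ :=
  fun ν => pd φ ν x

/-- Partial derivative of the Lagrangian density in its field argument `u`. -/
def Lu {D : ℕ} (L : (Fin D → ℝ) → ℝ → (Fin D → ℝ) → ℝ)
    (x : Fin D → ℝ) (u : ℝ) (p : Fin D → ℝ) : ℝ :=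
  deriv (fun v => L x v p) u

/-- Partial derivative of the Lagrangian density in the μ-th component of `p`. -/
def Lp {D : ℕ} (L : (Fin D → ℝ) → ℝ → (Fin D → ℝ) → ℝ) (μ : Fin D)
    (x : Fin D → ℝ) (u : ℝ) (p : Fin D → ℝ) : ℝ :=
  fderiv ℝ (fun q => L x u q) p (Pi.single μ 1)

/-!
By the chain rule and the symmetry of second derivatives, the first variation of the Lagrangian is
`L_u δΦ + ∑ L_{p_μ} ∂_μ δΦ`, with `L_u` and `L_{p_μ}` taken on the jet of `φ`. Moving `∂_μ` off `δΦ`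
by the product rule turns this, for every field `φ`, into the divergence of `L_{p_μ} δΦ` plus the
Euler–Lagrange expression times `δΦ`. On a solution only the divergence survives, and the total
divergence condition equates it with the divergence of `ψ`.
-/

section PartialDerivatives

variable {𝕜 E F G : Type*} [NontriviallyNormedField 𝕜] [NormedAddCommGroup E] [NormedSpace 𝕜 E]
  [NormedAddCommGroup F] [NormedSpace 𝕜 F] [NormedAddCommGroup G] [NormedSpace 𝕜 G]

theorem fderiv_comp_prodMk_right_apply {f : E × F → G} {a : E} {b : F}
    (hf : DifferentiableAt 𝕜 f (a, b)) (v : F) :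
    fderiv 𝕜 (fun y => f (a, y)) b v = fderiv 𝕜 f (a, b) (0, v) :=
  congrArg (· v) (hf.hasFDerivAt.comp b (hasFDerivAt_prodMk_right a b)).fderiv

theorem deriv_comp_prodMk_left {f : 𝕜 × F → G} {t : 𝕜} {b : F}
    (hf : DifferentiableAt 𝕜 f (t, b)) :
    deriv (fun s => f (s, b)) t = fderiv 𝕜 f (t, b) (1, 0) :=
  (hf.hasFDerivAt.comp_hasDerivAt t ((hasDerivAt_id t).prodMk (hasDerivAt_const t b))).deriv

theorem hasDerivAt_fderiv_comp_prodMk_right_apply {f : 𝕜 × F → G} {n : WithTop ℕ∞}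
    (hf : ContDiff 𝕜 n f) (hn : minSmoothness 𝕜 2 ≤ n) (t : 𝕜) (x v : F) :
    HasDerivAt (fun s => fderiv 𝕜 (fun y => f (s, y)) x v)
      (fderiv 𝕜 (fun y => deriv (fun s => f (s, y)) t) x v) t := by
  have two_le : 2 ≤ n := le_minSmoothness.trans hn
  have hdf : Differentiable 𝕜 f := hf.differentiable (two_pos.trans_le two_le).ne'
  have hd2f : Differentiable 𝕜 (fderiv 𝕜 f) :=
    (hf.fderiv_right (m := 1) (by rwa [one_add_one_eq_two])).differentiable one_ne_zero
  have hd2f_apply (w : 𝕜 × F) :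
      HasFDerivAt (fun q => fderiv 𝕜 f q w) ((fderiv 𝕜 (fderiv 𝕜 f) (t, x)).flip w) (t, x) := by
    simpa using (hd2f (t, x)).hasFDerivAt.clm_apply (hasFDerivAt_const w (t, x))
  have fderiv_deriv : fderiv 𝕜 (fun y => deriv (fun s => f (s, y)) t) x v =
      fderiv 𝕜 (fderiv 𝕜 f) (t, x) (1, 0) (0, v) := by
    simp only [deriv_comp_prodMk_left (hdf _)]
    rw [fderiv_comp_prodMk_right_apply (hd2f_apply (1, 0)).differentiableAt,
      (hd2f_apply (1, 0)).fderiv, ContinuousLinearMap.flip_apply]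
    exact (hf.contDiffAt.isSymmSndFDerivAt hn).eq _ _
  simp only [fderiv_deriv, fderiv_comp_prodMk_right_apply (hdf _)]
  exact (hd2f_apply (0, v)).comp_hasDerivAt t ((hasDerivAt_id t).prodMk (hasDerivAt_const t x))

end PartialDerivatives

section SpacetimeDerivatives

variable {D : ℕ}

theorem fderiv_apply_eq_sum_pd (F : (Fin D → ℝ) → ℝ) (x v : Fin D → ℝ) :
    fderiv ℝ F x v = ∑ μ, pd F μ x * v μ := by
  conv_lhs => rw [pi_eq_sum_univ' v]
  simp [pd, mul_comm, Pi.single]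

variable {F G : (Fin D → ℝ) → ℝ} {x : Fin D → ℝ}

theorem pd_mul (hF : DifferentiableAt ℝ F x) (hG : DifferentiableAt ℝ G x) (μ : Fin D) :
    pd (fun y => F y * G y) μ x = pd F μ x * G x + F x * pd G μ x := by
  simp only [pd, fderiv_fun_mul hF hG, add_apply, smul_apply, smul_eq_mul]
  ring

theorem pd_sub (hF : DifferentiableAt ℝ F x) (hG : DifferentiableAt ℝ G x) (μ : Fin D) :
    pd (fun y => F y - G y) μ x = pd F μ x - pd G μ x := by
  simp only [pd, fderiv_fun_sub hF hG, sub_apply]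

end SpacetimeDerivatives

/-- The first variation `δΦ = ∂Φ/∂ε` at `ε = 0` of a one-parameter family of fields `Φ (ε, ·)`. -/
def variation {D : ℕ} (Φ : ℝ × (Fin D → ℝ) → ℝ) (x : Fin D → ℝ) : ℝ :=
  deriv (fun ε => Φ (ε, x)) 0

/-- The Noether current `j^μ = L_{p_μ}(jφ) δΦ - ψ^μ` of the perturbation `Φ` of `φ`; here `ψ` is the
potential whose divergence is to account for the first variation of the Lagrangian. -/
def noetherCurrent {D : ℕ} (L : (Fin D → ℝ) → ℝ → (Fin D → ℝ) → ℝ) (φ : (Fin D → ℝ) → ℝ)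
    (Φ : ℝ × (Fin D → ℝ) → ℝ) (ψ : Fin D → (Fin D → ℝ) → ℝ) (μ : Fin D) (x : Fin D → ℝ) : ℝ :=
  Lp L μ x (φ x) (grad φ x) * variation Φ x - ψ μ x

section Variation

variable {D : ℕ} {L : (Fin D → ℝ) → ℝ → (Fin D → ℝ) → ℝ} {φ : (Fin D → ℝ) → ℝ}
  {Φ : ℝ × (Fin D → ℝ) → ℝ} {n : WithTop ℕ∞}

theorem contDiff_grad (hφ : ContDiff ℝ (n + 1) φ) : ContDiff ℝ n (grad φ) :=
  contDiff_pi.2 fun _ => (hφ.fderiv_right le_rfl).clm_apply contDiff_const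

theorem contDiff_Lp_jet (hL : ContDiff ℝ (n + 1) ↿L) (hφ : ContDiff ℝ (n + 1) φ) (μ : Fin D) :
    ContDiff ℝ n (fun y => Lp L μ y (φ y) (grad φ y)) := by
  have hLφ : ContDiff ℝ (n + 1) (Function.uncurry fun y q => L y (φ y) q) :=
    hL.comp (contDiff_fst.prodMk ((hφ.comp contDiff_fst).prodMk contDiff_snd))
  exact hLφ.fderiv_apply (contDiff_grad hφ) contDiff_const le_rfl

theorem contDiff_variation (hΦ : ContDiff ℝ (n + 1) Φ) : ContDiff ℝ n (variation Φ) := by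
  have hΦ_swap : ContDiff ℝ (n + 1) (Function.uncurry fun y ε => Φ (ε, y)) :=
    hΦ.comp (contDiff_snd.prodMk contDiff_fst)
  exact hΦ_swap.fderiv_apply contDiff_const contDiff_const le_rfl

theorem hasDerivAt_grad_variation (hΦ : ContDiff ℝ 2 Φ) (x : Fin D → ℝ) :
    HasDerivAt (fun ε => grad (fun y => Φ (ε, y)) x) (grad (variation Φ) x) 0 :=
  hasDerivAt_pi.2 fun _ => hasDerivAt_fderiv_comp_prodMk_right_apply hΦ
    minSmoothness_of_isRCLikeNormedField.le 0 x _

theorem hasDerivAt_lagrangian_comp {x : Fin D → ℝ} {u : ℝ → ℝ} {p : ℝ → Fin D → ℝ} {u' t : ℝ}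
    {p' : Fin D → ℝ} (hL : DifferentiableAt ℝ ↿(L x) (u t, p t)) (hu : HasDerivAt u u' t)
    (hp : HasDerivAt p p' t) :
    HasDerivAt (fun s => L x (u s) (p s))
      (Lu L x (u t) (p t) * u' + ∑ μ, Lp L μ x (u t) (p t) * p' μ) t := by
  have hLu : Lu L x (u t) (p t) = fderiv ℝ ↿(L x) (u t, p t) (1, 0) := deriv_comp_prodMk_left hL
  have hLp : ∑ μ, Lp L μ x (u t) (p t) * p' μ = fderiv ℝ ↿(L x) (u t, p t) (0, p') :=
    (fderiv_apply_eq_sum_pd (L x (u t)) (p t) p').symm.trans (fderiv_comp_prodMk_right_apply hL p')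
  have split : (u', p') = u' • ((1 : ℝ), (0 : Fin D → ℝ)) + (0, p') := by simp
  have total := hL.hasFDerivAt.comp_hasDerivAt t (hu.prodMk hp)
  rwa [split, map_add, map_smul, ← hLu, ← hLp, smul_eq_mul, mul_comm] at total

theorem deriv_lagrangian_jet (hL : Differentiable ℝ ↿L) (hΦ : ContDiff ℝ 2 Φ)
    (hΦ0 : ∀ x, Φ (0, x) = φ x) (x : Fin D → ℝ) :
    deriv (fun ε => L x (Φ (ε, x)) (grad (fun y => Φ (ε, y)) x)) 0 =
      Lu L x (φ x) (grad φ x) * variation Φ x +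
        ∑ μ, Lp L μ x (φ x) (grad φ x) * pd (variation Φ) μ x := by
  obtain rfl : (fun y => Φ (0, y)) = φ := funext hΦ0
  have hLx : Differentiable ℝ ↿(L x) := hL.comp ((differentiable_const x).prodMk differentiable_id)
  have hΦx : DifferentiableAt ℝ (fun ε => Φ (ε, x)) 0 :=
    (hΦ.differentiable two_ne_zero).comp (differentiable_id.prodMk (differentiable_const x)) 0
  exact (hasDerivAt_lagrangian_comp (hLx _) hΦx.hasDerivAt (hasDerivAt_grad_variation hΦ x)).deriv

theorem sum_pd_noetherCurrent (hL : ContDiff ℝ 2 ↿L) (hΦ : ContDiff ℝ 2 Φ)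
    (hΦ0 : ∀ x, Φ (0, x) = φ x) {ψ : Fin D → (Fin D → ℝ) → ℝ} {x : Fin D → ℝ}
    (hψ : ∀ μ, DifferentiableAt ℝ (ψ μ) x) :
    ∑ μ, pd (noetherCurrent L φ Φ ψ μ) μ x =
      (deriv (fun ε => L x (Φ (ε, x)) (grad (fun y => Φ (ε, y)) x)) 0 - ∑ μ, pd (ψ μ) μ x) -
        (Lu L x (φ x) (grad φ x) - ∑ μ, pd (fun y => Lp L μ y (φ y) (grad φ y)) μ x) *
          variation Φ x := by
  have hφ : ContDiff ℝ 2 φ := funext hΦ0 ▸ hΦ.comp (contDiff_const.prodMk contDiff_id)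
  have hP (μ : Fin D) : DifferentiableAt ℝ (fun y => Lp L μ y (φ y) (grad φ y)) x :=
    (contDiff_Lp_jet (n := 1) hL hφ μ).differentiable one_ne_zero x
  have hδ : DifferentiableAt ℝ (variation Φ) x :=
    (contDiff_variation (n := 1) hΦ).differentiable one_ne_zero x
  have pd_current (μ : Fin D) : pd (noetherCurrent L φ Φ ψ μ) μ x =
      pd (fun y => Lp L μ y (φ y) (grad φ y)) μ x * variation Φ x +
        Lp L μ x (φ x) (grad φ x) * pd (variation Φ) μ x - pd (ψ μ) μ x :=
    (pd_sub ((hP μ).mul hδ) (hψ μ) μ).trans (congrArg (· - _) (pd_mul (hP μ) hδ μ))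
  rw [deriv_lagrangian_jet (hL.differentiable two_ne_zero) hΦ hΦ0]
  simp only [pd_current, Finset.sum_sub_distrib, Finset.sum_add_distrib, ← Finset.sum_mul]
  ring

end Variation

theorem total_divergence_condition_yields_conserved_current_general {D : ℕ}
    {L : (Fin D → ℝ) → ℝ → (Fin D → ℝ) → ℝ} (hL : ContDiff ℝ 2 ↿L) {φ : (Fin D → ℝ) → ℝ}
    {Φ : ℝ × (Fin D → ℝ) → ℝ} (hΦ : ContDiff ℝ 2 Φ) (hΦ0 : ∀ x, Φ (0, x) = φ x)
    {ψ : Fin D → (Fin D → ℝ) → ℝ} {x : Fin D → ℝ} (hψ : ∀ μ, DifferentiableAt ℝ (ψ μ) x)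
    (hEL : Lu L x (φ x) (grad φ x) = ∑ μ, pd (fun y => Lp L μ y (φ y) (grad φ y)) μ x)
    (hTD : deriv (fun ε => L x (Φ (ε, x)) (grad (fun y => Φ (ε, y)) x)) 0 = ∑ μ, pd (ψ μ) μ x) :
    ∑ μ, pd (noetherCurrent L φ Φ ψ μ) μ x = 0 := by
  rw [sum_pd_noetherCurrent hL hΦ hΦ0 hψ, hTD, hEL, sub_self, sub_self, zero_mul, sub_zero]

/-- Theorem 3.2: the total divergence condition yields conserved currents. -/
theorem total_divergence_condition_yields_conserved_current {D : ℕ} (hD : 1 ≤ D)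
    (L : (Fin D → ℝ) → ℝ → (Fin D → ℝ) → ℝ)
    (hL : ContDiff ℝ (⊤ : ℕ∞) (fun q : (Fin D → ℝ) × ℝ × (Fin D → ℝ) => L q.1 q.2.1 q.2.2))
    (φ : (Fin D → ℝ) → ℝ) (hφ : ContDiff ℝ (⊤ : ℕ∞) φ)
    (hEL : ∀ x, Lu L x (φ x) (grad φ x) =
      ∑ μ, pd (fun y => Lp L μ y (φ y) (grad φ y)) μ x)
    (Φ : ℝ × (Fin D → ℝ) → ℝ) (hΦ : ContDiff ℝ (⊤ : ℕ∞) Φ)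
    (hΦ0 : ∀ x, Φ (0, x) = φ x)
    (ψ : Fin D → (Fin D → ℝ) → ℝ) (hψ : ∀ μ, ContDiff ℝ (⊤ : ℕ∞) (ψ μ))
    (hTD : ∀ x, deriv (fun ε => L x (Φ (ε, x)) (fun ν => pd (fun y => Φ (ε, y)) ν x)) 0 =
      ∑ μ, pd (ψ μ) μ x) :
    ∀ x, ∑ μ, pd (fun y =>
        Lp L μ y (φ y) (grad φ y) * deriv (fun ε => Φ (ε, y)) 0 - ψ μ y) μ x = 0 :=
  fun _ => total_divergence_condition_yields_conserved_current_general
    (contDiff_infty.1 hL 2) (contDiff_infty.1 hΦ 2) hΦ0 (fun μ => (hψ μ).differentiable (by simp) _)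
    (hEL _) (hTD _)

end
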